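/- Let ρ ∈ (0,1), R ≥ 0, N ≥ 0, c₁, c₂ ≥ 0, 0 < r < 1, m > 0, and L_max > 0 satisfy L_max·N·(c₁ + 2c₂/r) ≤ m·R and 1 − r ≤ ρ·(1 − r/2). Let (v_k)_{k≥1}, (F_k)_{k≥1}, (D_k)_{k≥1}, (S_k)_{k≥1} be nonnegative real sequences and (V_k)_{k≥0} a nonnegative real sequence such that for all k ≥ 1: v_{k+1} ≤ ρ·v_k − 2mR·F_k + N·D_k; D_k ≤ c₁·S_k + V_{k−1}; V_0 ≤ c₂·S_1 and V_k ≤ c₂·S_{k+1} + (1−r)·V_{k−1}; and S_k ≤ 2·L_max·F_k. Then v_{k+1} ≤ ρ^k·v_1 for all k ≥ 1. -/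

import Mathlib

/-!
The estimator's memory `V` is absorbed into the Lyapunov function: the potential
`v (k + 1) + w * V (k - 1)` contracts by `ρ` for a suitable weight `w`. Each step feeds
`N * V k` into `v`, so together with the weight the memory occurs with coefficient `N + w`;
its fresh part `c₂ * S (k + 1)` then costs `(N + w) * c₂ * S (k + 1)`, while its old part
`(1 - r) * V (k - 1)` must be covered by `ρ * w * V (k - 1)`.
The choice `N + w = 2 * N / r` settles both: the cost is the share `N * (2 * c₂ / r)` of the
robustness margin, and the requirement `(N + w) * (1 - r) ≤ ρ * w` becomes
`1 - r ≤ ρ * (1 - r / 2)`.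
-/

namespace VarianceReduction

section OrderedRing

variable {α : Type*} [CommRing α] [PartialOrder α] [IsOrderedRing α]

theorem le_sub_add_of_margin {x y F D S M N c β γ ℓ : α}
    (hN : 0 ≤ N) (hcβ : 0 ≤ c + β) (hF : 0 ≤ F) (hmargin : N * (c + β) * ℓ ≤ γ)
    (hx : x ≤ y - γ * F + N * D) (hD : D ≤ c * S + M) (hS : S ≤ ℓ * F) :
    x ≤ y - N * β * S + N * M := by
  have hcover : N * (c + β) * S ≤ γ * F :=
    calc N * (c + β) * S ≤ N * (c + β) * (ℓ * F) := by gcongr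
      _ = N * (c + β) * ℓ * F := by ring
      _ ≤ γ * F := by gcongr
  calc x ≤ y - γ * F + N * D := hx
    _ ≤ y - N * (c + β) * S + N * (c * S + M) := by gcongr
    _ = y - N * β * S + N * M := by ring

theorem add_mul_le_of_le_sub_add {x y e M t N w : α} (hNw : 0 ≤ N + w)
    (hx : x ≤ y - (N + w) * e + N * M) (hM : M ≤ e + t) :
    x + w * M ≤ y + (N + w) * t :=
  calc x + w * M ≤ y - (N + w) * e + N * M + w * M := by gcongr
    _ = y - (N + w) * e + (N + w) * M := by ring
    _ ≤ y - (N + w) * e + (N + w) * (e + t) := by gcongr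
    _ = y + (N + w) * t := by ring

theorem add_mul_le_pow_mul {u e W : ℕ → α} {ρ σ N w : α}
    (hρ : 0 ≤ ρ) (hNw : 0 ≤ N + w) (hσ : (N + w) * σ ≤ ρ * w) (hW : ∀ n, 0 ≤ W n)
    (hu : ∀ n, u (n + 1) ≤ ρ * u n - (N + w) * e n + N * W n)
    (hW_zero : W 0 ≤ e 0) (hW_succ : ∀ n, W (n + 1) ≤ e (n + 1) + σ * W n) (n : ℕ) :
    u (n + 1) + w * W n ≤ ρ ^ (n + 1) * u 0 := by
  induction n with
  | zero => simpa using add_mul_le_of_le_sub_add hNw (hu 0) (hW_zero.trans_eq (add_zero _).symm)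
  | succ n ih =>
    calc u (n + 2) + w * W (n + 1)
        ≤ ρ * u (n + 1) + (N + w) * (σ * W n) :=
          add_mul_le_of_le_sub_add hNw (hu (n + 1)) (hW_succ n)
      _ = ρ * u (n + 1) + (N + w) * σ * W n := by ring
      _ ≤ ρ * u (n + 1) + ρ * w * W n := by gcongr; exact hW n
      _ = ρ * (u (n + 1) + w * W n) := by ring
      _ ≤ ρ * (ρ ^ (n + 1) * u 0) := by gcongr
      _ = ρ ^ (n + 2) * u 0 := by ring

end OrderedRing

section Weight

variable {K : Type*} [Field K]

/-- The weight of the estimator's memory in the potential, for noise sensitivity `N` and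
memory decay `1 - r`. -/
def memoryWeight (N r : K) : K := N * (2 / r - 1)

theorem add_memoryWeight (N r : K) : N + memoryWeight N r = N * (2 / r) := by
  unfold memoryWeight
  ring

variable [LinearOrder K] [IsStrictOrderedRing K]

theorem memoryWeight_nonneg {N r : K} (hN : 0 ≤ N) (hr0 : 0 < r) (hr2 : r ≤ 2) :
    0 ≤ memoryWeight N r :=
  mul_nonneg hN (sub_nonneg.2 ((one_le_div hr0).2 hr2))

theorem add_memoryWeight_mul_le {ρ N r : K} (hN : 0 ≤ N) (hr : 0 < r)
    (hrate : 1 - r ≤ ρ * (1 - r / 2)) :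
    (N + memoryWeight N r) * (1 - r) ≤ ρ * memoryWeight N r :=
  calc (N + memoryWeight N r) * (1 - r) = N * (2 / r) * (1 - r) := by rw [add_memoryWeight]
    _ ≤ N * (2 / r) * (ρ * (1 - r / 2)) := by gcongr
    _ = ρ * memoryWeight N r := by unfold memoryWeight; field_simp

end Weight

end VarianceReduction

open VarianceReduction in
theorem variance_reduced_linear_convergence_general
    {K : Type*} [Field K] [LinearOrder K] [IsStrictOrderedRing K]
    {ρ R N c₁ c₂ r m Lmax : K}
    (hρ : 0 ≤ ρ) (hN : 0 ≤ N) (hc₁ : 0 ≤ c₁) (hc₂ : 0 ≤ c₂) (hr : 0 < r)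
    (hmain : Lmax * N * (c₁ + 2 * c₂ / r) ≤ m * R)
    (hrate : 1 - r ≤ ρ * (1 - r / 2))
    {v F D S V : ℕ → K}
    (hF : ∀ k, 1 ≤ k → 0 ≤ F k) (hV : ∀ k, 0 ≤ V k)
    (hvrec : ∀ k, 1 ≤ k → v (k + 1) ≤ ρ * v k - 2 * m * R * F k + N * D k)
    (hDrec : ∀ k, 1 ≤ k → D k ≤ c₁ * S k + V (k - 1))
    (hV_zero : V 0 ≤ c₂ * S 1)
    (hVrec : ∀ k, 1 ≤ k → V k ≤ c₂ * S (k + 1) + (1 - r) * V (k - 1))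
    (hSF : ∀ k, 1 ≤ k → S k ≤ 2 * Lmax * F k) (k : ℕ) (hk : 1 ≤ k) :
    v (k + 1) + memoryWeight N r * V (k - 1) ≤ ρ ^ k * v 1 := by
  obtain ⟨n, rfl⟩ := Nat.exists_eq_add_of_le' hk
  have hweight : 0 ≤ N + memoryWeight N r := by
    rw [add_memoryWeight]
    positivity
  have hmargin : N * (c₁ + 2 * c₂ / r) * (2 * Lmax) ≤ 2 * m * R := by linarith
  have hindex (i : ℕ) : 1 ≤ i + 1 := Nat.le_add_left 1 i
  have hdescent (i : ℕ) : v (i + 2) ≤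
      ρ * v (i + 1) - (N + memoryWeight N r) * (c₂ * S (i + 1)) + N * V i :=
    calc v (i + 2) ≤ ρ * v (i + 1) - N * (2 * c₂ / r) * S (i + 1) + N * V i :=
          le_sub_add_of_margin hN (by positivity) (hF _ (hindex i)) hmargin
            (hvrec _ (hindex i)) (hDrec _ (hindex i)) (hSF _ (hindex i))
      _ = ρ * v (i + 1) - (N + memoryWeight N r) * (c₂ * S (i + 1)) + N * V i := by
          rw [add_memoryWeight]
          ring
  exact add_mul_le_pow_mul (u := fun i => v (i + 1)) (e := fun i => c₂ * S (i + 1))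
    hρ hweight (add_memoryWeight_mul_le hN hr hrate) hV hdescent hV_zero
    (fun i => hVrec _ (hindex i)) n

/-- **Variance-reduced methods preserve linear convergence.**
If a robustly convergent method with contraction `ρ`, margin `R`, and noise
sensitivity `N` is driven by a gradient estimator satisfying the general growth
condition with constants `(c₁, c₂, r)`, and `L_max N (c₁ + 2c₂/r) ≤ m R` together
with `1 - r ≤ ρ (1 - r/2)`, then the expected Lyapunov function converges linearly:
`v_{k+1} ≤ ρ^k v_1`. -/
theorem variance_reduced_linear_convergence
    (ρ R N c₁ c₂ r m Lmax : ℝ)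
    (hρ0 : 0 < ρ) (hρ1 : ρ < 1) (hR : 0 ≤ R) (hN : 0 ≤ N)
    (hc₁ : 0 ≤ c₁) (hc₂ : 0 ≤ c₂) (hr0 : 0 < r) (hr1 : r < 1)
    (hm : 0 < m) (hLmax : 0 < Lmax)
    (hmain : Lmax * N * (c₁ + 2 * c₂ / r) ≤ m * R)
    (hrate : 1 - r ≤ ρ * (1 - r / 2))
    (v F D S V : ℕ → ℝ)
    (hv0 : ∀ k, 1 ≤ k → 0 ≤ v k) (hF0 : ∀ k, 1 ≤ k → 0 ≤ F k)
    (hD0 : ∀ k, 1 ≤ k → 0 ≤ D k) (hS0 : ∀ k, 1 ≤ k → 0 ≤ S k)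
    (hV0' : ∀ k, 0 ≤ V k)
    (hvrec : ∀ k, 1 ≤ k → v (k + 1) ≤ ρ * v k - 2 * m * R * F k + N * D k)
    (hDrec : ∀ k, 1 ≤ k → D k ≤ c₁ * S k + V (k - 1))
    (hV0 : V 0 ≤ c₂ * S 1)
    (hVrec : ∀ k, 1 ≤ k → V k ≤ c₂ * S (k + 1) + (1 - r) * V (k - 1))
    (hSF : ∀ k, 1 ≤ k → S k ≤ 2 * Lmax * F k) :
    ∀ k, 1 ≤ k → v (k + 1) ≤ ρ ^ k * v 1 := by
  intro k hk
  have hweight := VarianceReduction.memoryWeight_nonneg hN hr0 (hr1.le.trans one_le_two)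
  exact (le_add_of_nonneg_right (mul_nonneg hweight (hV0' (k - 1)))).trans <|
    variance_reduced_linear_convergence_general hρ0.le hN hc₁ hc₂ hr0 hmain hrate
      hF0 hV0' hvrec hDrec hV0 hVrec hSF k hk
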